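/- arXiv:2006.07925 — 3 statements merged into one kernel-verified Lean document; each statement's English description precedes it below -/
import Mathlib

section
/- Let h : ℝ^{p×r} → ℝ be differentiable and satisfy the (α,β,δ)-regularity condition at Z* ∈ ℝ^{p×r}, with α, β, δ > 0 and αβ ≤ 1/4. Let Z⁰ ∈ ℝ^{p×r} satisfy dist(Z⁰,Z*) ≤ δ, and define gradient-descent iterates Z^{j+1} = Z^j − ν_j ∇h(Z^j) with stepsizes ν_j ∈ (0, 2β] for j = 0,1,…,k. Then dist²(Z^{k+1}, Z*) ≤ [∏_{j=0}^{k} (1 − 2ν_j α)]·dist²(Z⁰, Z*), and in particular dist(Z^{k+1}, Z*) ≤ δ. -/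
/-!
One gradient step contracts the squared distance. If `R` is the minimiser supplied by the regularity
condition at `Z`, then `R` is a competitor for `Z - ν ∇h(Z)`, and expanding the square gives
`dist(Z - ν ∇h(Z), Z*)² ≤ (1 - 2να) dist(Z, Z*)² + ν(ν - 2β) ‖∇h(Z)‖²`,
whose last term is nonpositive for `0 < ν ≤ 2β` (`mdist_step`). As `αβ ≤ 1/4`, each factor
`1 - 2να` lies in `[0, 1]`, so the iterates stay in the `δ`-neighbourhood where the regularity
condition applies, and the one-step bounds multiply up by induction.
-/

open scoped Matrix

attribute [local instance] Matrix.frobeniusNormedAddCommGroup Matrix.frobeniusNormedSpace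

/-- The Frobenius inner product `⟨A, B⟩ = trace (Aᵀ B)`. -/
noncomputable def finner {ι κ : Type*} [Fintype ι] [Fintype κ]
    (A B : Matrix ι κ ℝ) : ℝ :=
  Matrix.trace (Aᵀ * B)

/-- The Frobenius norm. -/
noncomputable def fnorm {ι κ : Type*} [Fintype ι] [Fintype κ]
    (A : Matrix ι κ ℝ) : ℝ :=
  Real.sqrt (finner A A)

/-- `dist(Z¹,Z²) = min_{R ∈ O_r} ‖Z¹ − Z²R‖_F`. -/
noncomputable def mdist {ι : Type*} [Fintype ι] {r : ℕ}
    (Z₁ Z₂ : Matrix ι (Fin r) ℝ) : ℝ :=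
  ⨅ R : {R : Matrix (Fin r) (Fin r) ℝ // Rᵀ * R = 1},
    fnorm (Z₁ - Z₂ * (R : Matrix (Fin r) (Fin r) ℝ))

/-- The `(α, β, δ)`-regularity condition at `Zs`, for a function whose gradient is `gradh`:
for every `Z` with `dist(Z,Zs) ≤ δ` there is an orthogonal `R` attaining the minimum in
`dist(Z,Zs)` such that `⟨∇h(Z), Z − Zs R⟩ ≥ α dist(Z,Zs)² + β ‖∇h(Z)‖_F²`. -/
def RegularityCondition {ι : Type*} [Fintype ι] {r : ℕ}
    (gradh : Matrix ι (Fin r) ℝ → Matrix ι (Fin r) ℝ)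
    (Zs : Matrix ι (Fin r) ℝ) (α β δ : ℝ) : Prop :=
  ∀ Z : Matrix ι (Fin r) ℝ, mdist Z Zs ≤ δ →
    ∃ R : Matrix (Fin r) (Fin r) ℝ, Rᵀ * R = 1 ∧
      fnorm (Z - Zs * R) = mdist Z Zs ∧
      finner (gradh Z) (Z - Zs * R) ≥ α * mdist Z Zs ^ 2 + β * fnorm (gradh Z) ^ 2

lemma finner_self_nonneg {ι κ : Type*} [Fintype ι] [Fintype κ] (A : Matrix ι κ ℝ) :
    0 ≤ finner A A := by
  simp only [finner, Matrix.trace, Matrix.diag, Matrix.mul_apply, Matrix.transpose_apply]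
  exact Finset.sum_nonneg fun i _ => Finset.sum_nonneg fun j _ => mul_self_nonneg _

lemma fnorm_sq {ι κ : Type*} [Fintype ι] [Fintype κ] (A : Matrix ι κ ℝ) :
    fnorm A ^ 2 = finner A A :=
  Real.sq_sqrt (finner_self_nonneg A)

lemma finner_comm {ι κ : Type*} [Fintype ι] [Fintype κ] (A B : Matrix ι κ ℝ) :
    finner A B = finner B A := by
  rw [finner, finner, ← Matrix.trace_transpose, Matrix.transpose_mul, Matrix.transpose_transpose]

lemma fnorm_sub_smul_sq {ι κ : Type*} [Fintype ι] [Fintype κ] (A G : Matrix ι κ ℝ) (t : ℝ) :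
    fnorm (A - t • G) ^ 2 = fnorm A ^ 2 - 2 * t * finner G A + t ^ 2 * fnorm G ^ 2 := by
  have hc := finner_comm A G
  rw [fnorm_sq, fnorm_sq, fnorm_sq]
  simp only [finner, Matrix.transpose_sub, Matrix.transpose_smul, Matrix.sub_mul, Matrix.mul_sub,
    Matrix.smul_mul, Matrix.mul_smul, Matrix.trace_sub, Matrix.trace_smul, smul_eq_mul] at hc ⊢
  rw [hc]
  ring

lemma mdist_nonneg {ι : Type*} [Fintype ι] {r : ℕ} (Z₁ Z₂ : Matrix ι (Fin r) ℝ) :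
    0 ≤ mdist Z₁ Z₂ :=
  Real.iInf_nonneg fun _ => Real.sqrt_nonneg _

lemma mdist_le {ι : Type*} [Fintype ι] {r : ℕ} (Z₁ Z₂ : Matrix ι (Fin r) ℝ)
    (R : Matrix (Fin r) (Fin r) ℝ) (hR : Rᵀ * R = 1) :
    mdist Z₁ Z₂ ≤ fnorm (Z₁ - Z₂ * R) :=
  ciInf_le (f := fun R : {R : Matrix (Fin r) (Fin r) ℝ // Rᵀ * R = 1} =>
    fnorm (Z₁ - Z₂ * (R : Matrix (Fin r) (Fin r) ℝ)))
    ⟨0, by rintro _ ⟨_, rfl⟩; exact Real.sqrt_nonneg _⟩ ⟨R, hR⟩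

/-- A gradient step of length `t ∈ (0, 2β]` from inside the `δ`-neighbourhood contracts the squared
distance by the factor `1 - 2tα`. -/
lemma mdist_step {ι : Type*} [Fintype ι] {r : ℕ}
    {gradh : Matrix ι (Fin r) ℝ → Matrix ι (Fin r) ℝ} {Zs : Matrix ι (Fin r) ℝ} {α β δ : ℝ}
    (hreg : RegularityCondition gradh Zs α β δ) {Z : Matrix ι (Fin r) ℝ} (hZ : mdist Z Zs ≤ δ)
    {t : ℝ} (ht : 0 < t) (htβ : t ≤ 2 * β) :
    mdist (Z - t • gradh Z) Zs ^ 2 ≤ (1 - 2 * t * α) * mdist Z Zs ^ 2 := by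
  obtain ⟨R, hR, hmin, hge⟩ := hreg Z hZ
  have hle : mdist (Z - t • gradh Z) Zs ^ 2 ≤ fnorm (Z - t • gradh Z - Zs * R) ^ 2 :=
    pow_le_pow_left₀ (mdist_nonneg _ _) (mdist_le _ _ R hR) 2
  rw [sub_right_comm, fnorm_sub_smul_sq, hmin] at hle
  have h1 := mul_le_mul_of_nonneg_left hge ht.le
  have h2 : 0 ≤ t * (2 * β - t) * fnorm (gradh Z) ^ 2 :=
    mul_nonneg (mul_nonneg ht.le (sub_nonneg.2 htβ)) (sq_nonneg _)
  linarith

theorem stmt2 {p r : ℕ} (h : Matrix (Fin p) (Fin r) ℝ → ℝ)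
    (gradh : Matrix (Fin p) (Fin r) ℝ → Matrix (Fin p) (Fin r) ℝ)
    (Zs : Matrix (Fin p) (Fin r) ℝ) (α β δ : ℝ)
    (hα : 0 < α) (hβ : 0 < β) (hδ : 0 < δ)
    (hαβ : α * β ≤ 1 / 4)
    (hdiff : Differentiable ℝ h)
    (hgrad : ∀ Z D, fderiv ℝ h Z D = finner (gradh Z) D)
    (hreg : RegularityCondition gradh Zs α β δ)
    (k : ℕ) (Z : ℕ → Matrix (Fin p) (Fin r) ℝ) (ν : ℕ → ℝ)
    (hZ0 : mdist (Z 0) Zs ≤ δ)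
    (hν : ∀ j ≤ k, 0 < ν j ∧ ν j ≤ 2 * β)
    (hupd : ∀ j ≤ k, Z (j + 1) = Z j - ν j • gradh (Z j)) :
    mdist (Z (k + 1)) Zs ^ 2
        ≤ (∏ j ∈ Finset.range (k + 1), (1 - 2 * ν j * α)) * mdist (Z 0) Zs ^ 2 ∧
      mdist (Z (k + 1)) Zs ≤ δ := by
  have key : ∀ n ≤ k + 1, mdist (Z n) Zs ^ 2
      ≤ (∏ j ∈ Finset.range n, (1 - 2 * ν j * α)) * mdist (Z 0) Zs ^ 2 ∧
        mdist (Z n) Zs ≤ δ := by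
    intro n
    induction n with
    | zero => exact fun _ => ⟨by simp, hZ0⟩
    | succ n ih =>
      intro hn
      have hnk : n ≤ k := Nat.succ_le_succ_iff.1 hn
      obtain ⟨hprod, hδn⟩ := ih (by lia)
      obtain ⟨hpos, hle⟩ := hν n hnk
      have hstep := mdist_step hreg hδn hpos hle
      rw [← hupd n hnk] at hstep
      have hα2 : ν n * α ≤ 2 * β * α := mul_le_mul_of_nonneg_right hle hα.le
      have hfac : 0 ≤ 1 - 2 * ν n * α := by linarith
      constructor
      · rw [Finset.prod_range_succ]
        have := mul_le_mul_of_nonneg_left hprod hfac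
        linarith
      · have hνα : 0 ≤ ν n * α * mdist (Z n) Zs ^ 2 := by positivity
        exact (abs_le_of_sq_le_sq' (by linarith) (mdist_nonneg _ _)).2.trans hδn
  exact key (k + 1) le_rfl
end

section
/- Let E be a finite-dimensional real inner product space and G : E → ℝ be differentiable with ∇G Lipschitz continuous with constant L_g > 0. Fix η ∈ (0,1), θ ∈ (0,1), constants c_β, γ₀, R > 0, and a scalar β_k satisfying β_k ≥ 2c_β/(√2·γ₀^{1/2} + R)². Let W ∈ E with ∇G(W) ≠ 0. Then there exists a smallest nonnegative integer j such that G(W − 2β_kθ^j ∇G(W)) < G(W) − η·2β_kθ^j·‖∇G(W)‖², and this j satisfies j ≤ ĵ + 1, where ĵ := max{0, log_θ((1−η)/(L_g β_k))}. Moreover, with ν := 2β_kθ^j, G(W) − G(W − ν∇G(W)) ≥ c_local·‖∇G(W)‖², where c_local := η·min{4c_β/(√2·γ₀^{1/2} + R)², 2θ(1−η)/L_g}. -/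
/-!
By the descent lemma, the decrease along the negative gradient with step `t > 0` is at least
`t (1 - Lg t / 2) ‖∇G W‖²`, so the sufficient decrease condition holds as soon as
`Lg t / 2 < 1 - η`. For `t = 2 βk θ ^ n` this says `n > log_θ ((1 - η) / (Lg βk))`, which gives
existence and the bound on the first accepted exponent `j`. The accepted step is bounded below:
if `j = 0` it is `2 βk`, and otherwise the step for `j - 1` was rejected, hence is at least
`2 (1 - η) / Lg`.
-/

/-- The descent lemma: a function with `L`-Lipschitz gradient lies below its quadratic model.
The difference of the two along the segment from `W` to `W + D` has nonpositive derivative. -/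
lemma descent_lemma {E : Type*} [NormedAddCommGroup E] [InnerProductSpace ℝ E]
    [CompleteSpace E] (G : E → ℝ) (L : ℝ) (hdiff : Differentiable ℝ G)
    (hLip : ∀ x y : E, ‖gradient G x - gradient G y‖ ≤ L * ‖x - y‖) (W D : E) :
    G (W + D) ≤ G W + inner ℝ (gradient G W) D + L / 2 * ‖D‖ ^ 2 := by
  have hd : ∀ t : ℝ, HasDerivAt
      (fun t : ℝ => G (W + t • D) - t * inner ℝ (gradient G W) D - t ^ 2 * (L / 2 * ‖D‖ ^ 2))
      (inner ℝ (gradient G (W + t • D)) D - inner ℝ (gradient G W) D - t * (L * ‖D‖ ^ 2)) t := by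
    intro t
    have h1 : HasDerivAt (fun t : ℝ => W + t • D) D t := by
      simpa using ((hasDerivAt_id t).smul_const D).const_add W
    have h2 := (hdiff (W + t • D)).hasGradientAt.hasFDerivAt.comp_hasDerivAt t h1
    rw [InnerProductSpace.toDual_apply_apply] at h2
    have h3 := (hasDerivAt_id t).mul_const (inner ℝ (gradient G W) D)
    have h4 := ((hasDerivAt_id t).pow 2).mul_const (L / 2 * ‖D‖ ^ 2)
    refine ((h2.sub h3).sub h4).congr_deriv ?_
    simp
    ring
  have hanti : AntitoneOn
      (fun t : ℝ => G (W + t • D) - t * inner ℝ (gradient G W) D - t ^ 2 * (L / 2 * ‖D‖ ^ 2))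
      (Set.Icc 0 1) := by
    refine antitoneOn_of_deriv_nonpos (convex_Icc 0 1)
      (fun t _ => (hd t).continuousAt.continuousWithinAt)
      (fun t _ => (hd t).differentiableAt.differentiableWithinAt) ?_
    intro t ht
    rw [interior_Icc] at ht
    rw [(hd t).deriv, ← inner_sub_left]
    have h1 := real_inner_le_norm (gradient G (W + t • D) - gradient G W) D
    have h2 := hLip (W + t • D) W
    rw [add_sub_cancel_left, norm_smul, Real.norm_of_nonneg ht.1.le] at h2
    nlinarith [mul_le_mul_of_nonneg_right h2 (norm_nonneg D)]
  have h := hanti (Set.left_mem_Icc.2 zero_le_one) (Set.right_mem_Icc.2 zero_le_one) zero_le_one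
  simp only [one_smul, zero_smul, add_zero] at h
  linarith

theorem stmt16 {E : Type*} [NormedAddCommGroup E] [InnerProductSpace ℝ E]
    [FiniteDimensional ℝ E]
    (G : E → ℝ) (Lg η θ cβ γ₀ R βk : ℝ)
    (hLg : 0 < Lg) (hη : 0 < η) (hη1 : η < 1) (hθ : 0 < θ) (hθ1 : θ < 1)
    (hcβ : 0 < cβ) (hγ₀ : 0 < γ₀) (hR : 0 < R)
    (hβk : 2 * cβ / (Real.sqrt 2 * Real.sqrt γ₀ + R) ^ 2 ≤ βk)
    (hdiff : Differentiable ℝ G)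
    (hLip : ∀ x y : E, ‖gradient G x - gradient G y‖ ≤ Lg * ‖x - y‖)
    (W : E) (hW : gradient G W ≠ 0) :
    ∃ j : ℕ,
      (G (W - (2 * βk * θ ^ j) • gradient G W)
        < G W - η * (2 * βk * θ ^ j) * ‖gradient G W‖ ^ 2) ∧
      (∀ i : ℕ, i < j →
        ¬ (G (W - (2 * βk * θ ^ i) • gradient G W)
            < G W - η * (2 * βk * θ ^ i) * ‖gradient G W‖ ^ 2)) ∧
      (j : ℝ) ≤ max 0 (Real.log ((1 - η) / (Lg * βk)) / Real.log θ) + 1 ∧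
      G W - G (W - (2 * βk * θ ^ j) • gradient G W)
        ≥ η * min (4 * cβ / (Real.sqrt 2 * Real.sqrt γ₀ + R) ^ 2) (2 * θ * (1 - η) / Lg)
            * ‖gradient G W‖ ^ 2 := by
  have hD : 0 < (Real.sqrt 2 * Real.sqrt γ₀ + R) ^ 2 := by positivity
  have hβ : 0 < βk := lt_of_lt_of_le (by positivity) hβk
  have hg : 0 < ‖gradient G W‖ ^ 2 := pow_pos (norm_pos_iff.2 hW) 2
  have key : ∀ n : ℕ, Lg * βk * θ ^ n < 1 - η →
      G (W - (2 * βk * θ ^ n) • gradient G W)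
        < G W - η * (2 * βk * θ ^ n) * ‖gradient G W‖ ^ 2 := by
    intro n hn
    have ht : 0 < 2 * βk * θ ^ n := by positivity
    have h := descent_lemma G Lg hdiff hLip W (-((2 * βk * θ ^ n) • gradient G W))
    rw [← sub_eq_add_neg, inner_neg_right, real_inner_smul_right, real_inner_self_eq_norm_sq,
      norm_neg, norm_smul, Real.norm_of_nonneg ht.le] at h
    have h2 := mul_pos (mul_pos ht hg) (sub_pos.2 hn)
    nlinarith
  set J := max 0 (Real.log ((1 - η) / (Lg * βk)) / Real.log θ) with hJ
  have hr : 0 < (1 - η) / (Lg * βk) := div_pos (by linarith) (by positivity)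
  have hex : Lg * βk * θ ^ (⌊J⌋₊ + 1) < 1 - η := by
    have h1 : Real.log ((1 - η) / (Lg * βk)) / Real.log θ < ((⌊J⌋₊ + 1 : ℕ) : ℝ) := by
      push_cast
      exact lt_of_le_of_lt (le_max_right _ _) (Nat.lt_floor_add_one J)
    -- `log θ < 0` reverses the inequality
    rw [div_lt_iff_of_neg (Real.log_neg hθ hθ1), ← Real.log_pow,
      Real.log_lt_log_iff (by positivity) hr, lt_div_iff₀ (by positivity)] at h1
    linarith
  classical
  have hP : ∃ n : ℕ, G (W - (2 * βk * θ ^ n) • gradient G W)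
      < G W - η * (2 * βk * θ ^ n) * ‖gradient G W‖ ^ 2 := ⟨_, key _ hex⟩
  refine ⟨Nat.find hP, Nat.find_spec hP, fun i hi => Nat.find_min hP hi, ?_, ?_⟩
  · have h1 : ((Nat.find hP : ℕ) : ℝ) ≤ ((⌊J⌋₊ + 1 : ℕ) : ℝ) :=
      Nat.cast_le.2 (Nat.find_min' hP (key _ hex))
    push_cast at h1
    linarith [Nat.floor_le (le_max_left 0 _ : 0 ≤ J)]
  · have hs := Nat.find_spec hP
    have hmin := fun i (hi : i < Nat.find hP) => Nat.find_min hP hi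
    generalize Nat.find hP = j at hs hmin
    have hstep : min (4 * cβ / (Real.sqrt 2 * Real.sqrt γ₀ + R) ^ 2) (2 * θ * (1 - η) / Lg)
        ≤ 2 * βk * θ ^ j := by
      cases j with
      | zero =>
        refine (min_le_left _ _).trans ?_
        rw [div_le_iff₀ hD] at hβk ⊢
        linarith
      | succ m =>
        refine (min_le_right _ _).trans ?_
        have h1 : 1 - η ≤ Lg * βk * θ ^ m :=
          not_lt.1 fun h => hmin m (Nat.lt_succ_self m) (key m h)
        rw [div_le_iff₀ hLg, pow_succ]
        nlinarith
    have h2 := mul_le_mul_of_nonneg_right (mul_le_mul_of_nonneg_left hstep hη.le) hg.le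
    linarith
end

section
/- Let E be a finite-dimensional real inner product space and G : E → ℝ be twice continuously differentiable with ∇²G Lipschitz continuous with constant L_H > 0. Fix η ∈ (0,1), θ ∈ (0,1), c_γ > 0, γ > 0, a point W ∈ E, and a direction D ∈ E satisfying ⟨∇G(W), D⟩ ≤ 0 and ⟨D, ∇²G(W)D⟩ = −‖D‖³ ≤ −(1/8)·c_γ³·γ³. Then there exists a smallest nonnegative integer j such that G(W + θ^j D) < G(W) + (η/2)·θ^{2j}·⟨D, ∇²G(W)D⟩, and this j satisfies j ≤ j_nc + 1, where j_nc := max{0, log_θ(3(1−η)/L_H)}. Moreover, with ν := θ^j, G(W) − G(W + νD) ≥ c_nc·γ³, where c_nc := (η·c_γ³/16)·min{1, (3θ(1−η)/L_H)²}. -/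
/-!
Write `q = 3 (1 - η) / LH`. Lipschitz continuity of the Hessian gives the cubic upper bound
`cubic_upper_bound`, so along `D` (where the slope is nonpositive and the curvature is `-‖D‖ ^ 3`)
`G (W + t • D) ≤ G W - t ^ 2 / 2 * ‖D‖ ^ 3 + LH / 6 * t ^ 3 * ‖D‖ ^ 3`, and every step `0 < t < q`
passes the sufficient decrease test. Since `θ ^ j → 0`, backtracking stops; take the first accepted
`j`. If `j = 0` the decrease is at least `η / 2 * ‖D‖ ^ 3`. Otherwise `j - 1` was rejected, so
`q ≤ θ ^ (j - 1)`; taking logarithms bounds `j`, and `θ * q ≤ θ ^ j` bounds the decrease from below.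
-/

open scoped RealInnerProductSpace

/-- If `f'' t ≤ a + b * t` for `t ≥ 0`, then `f` lies below the cubic obtained by integrating this
bound twice. -/
lemma le_cubic_of_second_deriv_le {f f' f'' : ℝ → ℝ} {a b : ℝ}
    (hf : ∀ t, HasDerivAt f (f' t) t) (hf' : ∀ t, HasDerivAt f' (f'' t) t)
    (hb : ∀ t, 0 ≤ t → f'' t ≤ a + b * t) {t : ℝ} (ht : 0 ≤ t) :
    f t ≤ f 0 + f' 0 * t + a / 2 * t ^ 2 + b / 6 * t ^ 3 := by
  have h1 : ∀ t, HasDerivAt (fun t => a * t + b / 2 * t ^ 2 - f' t) (a + b * t - f'' t) t := by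
    intro t
    have h := (((hasDerivAt_id t).const_mul a).add
      (((hasDerivAt_id t).pow 2).const_mul (b / 2))).sub (hf' t)
    refine h.congr_deriv ?_
    simp only [id]
    ring
  have h2 : ∀ t, HasDerivAt
      (fun t => f' 0 * t + a / 2 * t ^ 2 + b / 6 * t ^ 3 - f t)
      (f' 0 + a * t + b / 2 * t ^ 2 - f' t) t := by
    intro t
    have h := ((((hasDerivAt_id t).const_mul (f' 0)).add
      (((hasDerivAt_id t).pow 2).const_mul (a / 2))).add
      (((hasDerivAt_id t).pow 3).const_mul (b / 6))).sub (hf t)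
    refine h.congr_deriv ?_
    simp only [id]
    ring
  have m1 : MonotoneOn (fun t => a * t + b / 2 * t ^ 2 - f' t) (Set.Ici 0) := by
    refine monotoneOn_of_hasDerivWithinAt_nonneg (convex_Ici 0)
      (fun x _ => (h1 x).continuousAt.continuousWithinAt)
      (fun x _ => (h1 x).hasDerivWithinAt) ?_
    intro x hx
    rw [interior_Ici] at hx
    linarith [hb x (le_of_lt hx)]
  have m2 : MonotoneOn (fun t => f' 0 * t + a / 2 * t ^ 2 + b / 6 * t ^ 3 - f t) (Set.Ici 0) := by
    refine monotoneOn_of_hasDerivWithinAt_nonneg (convex_Ici 0)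
      (fun x _ => (h2 x).continuousAt.continuousWithinAt)
      (fun x _ => (h2 x).hasDerivWithinAt) ?_
    intro x hx
    rw [interior_Ici] at hx
    have h := m1 (Set.mem_Ici.2 le_rfl) (Set.mem_Ici.2 (le_of_lt hx)) (le_of_lt hx)
    norm_num at h
    linarith
  have h := m2 (Set.mem_Ici.2 le_rfl) (Set.mem_Ici.2 ht) ht
  norm_num at h
  linarith

/-- The cubic upper bound for a function with Lipschitz Hessian, along the ray `W + t • D`. -/
lemma cubic_upper_bound {E : Type*} [NormedAddCommGroup E] [NormedSpace ℝ E]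
    {G : E → ℝ} {LH : ℝ} (hG : ContDiff ℝ 2 G)
    (hLip : ∀ x y : E, ‖iteratedFDeriv ℝ 2 G x - iteratedFDeriv ℝ 2 G y‖ ≤ LH * ‖x - y‖)
    (W D : E) {t : ℝ} (ht : 0 ≤ t) :
    G (W + t • D) ≤ G W + fderiv ℝ G W D * t
      + iteratedFDeriv ℝ 2 G W ![D, D] / 2 * t ^ 2 + LH * ‖D‖ ^ 3 / 6 * t ^ 3 := by
  have hline : ∀ s : ℝ, HasDerivAt (fun s : ℝ => W + s • D) D s := by
    intro s
    simpa using ((hasDerivAt_id s).smul_const D).const_add W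
  have hd : Differentiable ℝ G := hG.differentiable (by norm_num)
  have hd' : Differentiable ℝ (fderiv ℝ G) :=
    (hG.fderiv_right (m := 1) (by norm_num)).differentiable (by norm_num)
  have h1 : ∀ s : ℝ, HasDerivAt (fun s : ℝ => G (W + s • D)) (fderiv ℝ G (W + s • D) D) s :=
    fun s => (hd _).hasFDerivAt.comp_hasDerivAt s (hline s)
  have h2 : ∀ s : ℝ, HasDerivAt (fun s : ℝ => fderiv ℝ G (W + s • D) D)
      (iteratedFDeriv ℝ 2 G (W + s • D) ![D, D]) s := by
    intro s
    have h := ((hd' _).hasFDerivAt.comp_hasDerivAt s (hline s)).clm_apply (hasDerivAt_const s D)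
    refine h.congr_deriv ?_
    simp [iteratedFDeriv_two_apply]
  have h3 : ∀ s : ℝ, 0 ≤ s → iteratedFDeriv ℝ 2 G (W + s • D) ![D, D]
      ≤ iteratedFDeriv ℝ 2 G W ![D, D] + LH * ‖D‖ ^ 3 * s := by
    intro s hs
    have h := (iteratedFDeriv ℝ 2 G (W + s • D) - iteratedFDeriv ℝ 2 G W).le_opNorm ![D, D]
    have hl := hLip (W + s • D) W
    rw [add_sub_cancel_left, norm_smul, Real.norm_of_nonneg hs] at hl
    simp only [sub_apply, Fin.prod_univ_two, Matrix.cons_val_zero,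
      Matrix.cons_val_one] at h
    have h' := mul_le_mul_of_nonneg_right hl (mul_nonneg (norm_nonneg D) (norm_nonneg D))
    have h'' := (le_abs_self _).trans (h.trans h')
    linarith
  have h := le_cubic_of_second_deriv_le h1 h2 h3 ht
  simpa using h

theorem stmt17 {E : Type*} [NormedAddCommGroup E] [InnerProductSpace ℝ E]
    [FiniteDimensional ℝ E]
    (G : E → ℝ) (LH η θ cγ γ : ℝ)
    (hLH : 0 < LH) (hη : 0 < η) (hη1 : η < 1) (hθ : 0 < θ) (hθ1 : θ < 1)
    (hcγ : 0 < cγ) (hγ : 0 < γ)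
    (hG : ContDiff ℝ 2 G)
    (hLip : ∀ x y : E, ‖iteratedFDeriv ℝ 2 G x - iteratedFDeriv ℝ 2 G y‖ ≤ LH * ‖x - y‖)
    (W D : E)
    (hdir : ⟪gradient G W, D⟫ ≤ 0)
    (hcurv : iteratedFDeriv ℝ 2 G W ![D, D] = -‖D‖ ^ 3)
    (hcurv' : iteratedFDeriv ℝ 2 G W ![D, D] ≤ -(1 / 8) * cγ ^ 3 * γ ^ 3) :
    ∃ j : ℕ,
      (G (W + θ ^ j • D) < G W + (η / 2) * θ ^ (2 * j) * iteratedFDeriv ℝ 2 G W ![D, D]) ∧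
      (∀ i : ℕ, i < j →
        ¬ (G (W + θ ^ i • D)
            < G W + (η / 2) * θ ^ (2 * i) * iteratedFDeriv ℝ 2 G W ![D, D])) ∧
      (j : ℝ) ≤ max 0 (Real.log (3 * (1 - η) / LH) / Real.log θ) + 1 ∧
      G W - G (W + θ ^ j • D)
        ≥ (η * cγ ^ 3 / 16) * min 1 ((3 * θ * (1 - η) / LH) ^ 2) * γ ^ 3 := by
  have hDγ : 1 / 8 * cγ ^ 3 * γ ^ 3 ≤ ‖D‖ ^ 3 := by linarith
  have hcg : 0 < cγ ^ 3 * γ ^ 3 := by positivity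
  have hD : 0 < ‖D‖ ^ 3 := by linarith
  have hslope : fderiv ℝ G W D ≤ 0 := by
    rwa [gradient, InnerProductSpace.toDual_symm_apply] at hdir
  rw [hcurv]
  have hq : 0 < 3 * (1 - η) / LH := div_pos (by linarith) hLH
  set q := 3 * (1 - η) / LH with hqdef
  have hqL : q * LH = 3 * (1 - η) := div_mul_cancel₀ _ hLH.ne'
  have haccept : ∀ i : ℕ, θ ^ i < q →
      G (W + θ ^ i • D) < G W + (η / 2) * θ ^ (2 * i) * -‖D‖ ^ 3 := by
    intro i hi
    have ht : 0 < θ ^ i := pow_pos hθ i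
    have h := cubic_upper_bound hG hLip W D ht.le
    rw [hcurv] at h
    have h1 := mul_nonpos_of_nonpos_of_nonneg hslope ht.le
    have h2 : θ ^ i * LH < 3 * (1 - η) := hqL ▸ mul_lt_mul_of_pos_right hi hLH
    have h3 := mul_lt_mul_of_pos_left h2 (mul_pos (pow_pos ht 2) hD)
    rw [mul_comm 2 i, pow_mul]
    nlinarith
  have hex : ∃ i : ℕ, G (W + θ ^ i • D) < G W + (η / 2) * θ ^ (2 * i) * -‖D‖ ^ 3 := by
    obtain ⟨i, hi⟩ := exists_pow_lt_of_lt_one hq hθ1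
    exact ⟨i, haccept i hi⟩
  classical
  refine ⟨Nat.find hex, Nat.find_spec hex, fun i hi => Nat.find_min hex hi, ?_, ?_⟩
  · rcases hj : Nat.find hex with _ | k
    · have := le_max_left 0 (Real.log q / Real.log θ)
      push_cast
      linarith
    · have hk : q ≤ θ ^ k :=
        not_lt.1 fun h => Nat.find_min hex (by omega : k < Nat.find hex) (haccept k h)
      have hlog := Real.log_le_log hq hk
      rw [Real.log_pow] at hlog
      -- `log θ < 0`, so dividing by it reverses the inequality
      have hk' : (k : ℝ) ≤ Real.log q / Real.log θ := by
        rwa [le_div_iff_of_neg (Real.log_neg hθ hθ1)]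
      have := le_max_right 0 (Real.log q / Real.log θ)
      push_cast
      linarith
  · have hspec := Nat.find_spec hex
    have hqθ : 3 * θ * (1 - η) / LH = θ * q := by
      rw [hqdef]
      ring
    have hmin : min 1 ((3 * θ * (1 - η) / LH) ^ 2) ≤ θ ^ (2 * Nat.find hex) := by
      rw [hqθ]
      rcases hj : Nat.find hex with _ | k
      · simp
      · have hk : q ≤ θ ^ k :=
          not_lt.1 fun h => Nat.find_min hex (by omega : k < Nat.find hex) (haccept k h)
        refine (min_le_right _ _).trans ?_
        rw [mul_comm 2, pow_mul, pow_succ' θ k]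
        gcongr
    calc G W - G (W + θ ^ Nat.find hex • D)
        ≥ η / 2 * θ ^ (2 * Nat.find hex) * ‖D‖ ^ 3 := by linarith
      _ ≥ η / 2 * min 1 ((3 * θ * (1 - η) / LH) ^ 2) * (1 / 8 * cγ ^ 3 * γ ^ 3) := by
        gcongr
      _ = _ := by ring
end
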